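/- Let f ∈ 𝒮(ℝ²) and g ∈ 𝒮(ℝ), and for ε > 0 define h_ε(x_h, x₃) = f(x_h) g(ε x₃). Then there exists ε₀ > 0 such that for all 0 < ε ≤ ε₀, ‖h_ε‖_{Ḃ^{-1}_{∞,∞}(ℝ³)} ≥ (1/4) ‖f‖_{Ḃ^{-1}_{∞,∞}(ℝ²)} ‖g‖_{L^∞(ℝ)}. -/

import Mathlib

open MeasureTheory Real
open scoped FourierTransform ENNReal

noncomputable section

/-- `ℝ^d` as a Euclidean space. -/
abbrev E (d : ℕ) := EuclideanSpace ℝ (Fin d)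

/-- Homogeneous Sobolev norm `‖f‖_{Ḣ^s(ℝ^d)} = (∫ |ξ|^{2s} |𝓕f(ξ)|² dξ)^{1/2}`. -/
noncomputable def hNorm (d : ℕ) (s : ℝ) (f : E d → ℂ) : ℝ :=
  (∫ ξ : E d, ‖ξ‖ ^ (2 * s) * ‖𝓕 f ξ‖ ^ 2) ^ (1/2 : ℝ)

/-- Heat semigroup `e^{tΔ}` on `ℝ^d`: convolution with the Gaussian heat kernel. -/
noncomputable def heat (d : ℕ) (t : ℝ) (u : E d → ℂ) (x : E d) : ℂ :=
  ∫ y : E d, ((4 * π * t) ^ (-(d : ℝ) / 2) * Real.exp (-‖x - y‖ ^ 2 / (4 * t)) : ℝ) * u y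

/-- Heat semigroup on `ℝ`. -/
noncomputable def heat1 (t : ℝ) (u : ℝ → ℂ) (x : ℝ) : ℂ :=
  ∫ y : ℝ, ((4 * π * t) ^ (-(1 : ℝ) / 2) * Real.exp (-(x - y) ^ 2 / (4 * t)) : ℝ) * u y

/-- The Besov `Ḃ^{-1}_{∞,∞}(ℝ^d)` norm via the heat flow. -/
noncomputable def besov (d : ℕ) (u : E d → ℂ) : ℝ :=
  ⨆ t > (0:ℝ), Real.sqrt t * ⨆ x : E d, ‖heat d t u x‖

lemma aux_gauss (d : ℕ) (t : ℝ) (ht : 0 < t) (x : E d) :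
    Integrable (fun y : E d => (4 * π * t) ^ (-(d : ℝ) / 2) * Real.exp (-‖x - y‖ ^ 2 / (4 * t))) ∧
    ∫ y : E d, (4 * π * t) ^ (-(d : ℝ) / 2) * Real.exp (-‖x - y‖ ^ 2 / (4 * t)) = 1 := by
  have hb : 0 < 1 / (4 * t) := by positivity
  have h := GaussianFourier.integral_rexp_neg_mul_sq_norm (V := E d) hb
  have h2 : ∫ y : E d, (4 * π * t) ^ (-(d : ℝ) / 2) * Real.exp (-‖x - y‖ ^ 2 / (4 * t)) = 1 := by
    rw [integral_const_mul,
      integral_sub_left_eq_self (fun z : E d => Real.exp (-‖z‖ ^ 2 / (4 * t))) volume x]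
    have e : (fun z : E d => Real.exp (-‖z‖ ^ 2 / (4 * t))) =
        fun z => Real.exp (-(1 / (4 * t)) * ‖z‖ ^ 2) := by
      funext z; congr 1; ring
    rw [e, h, finrank_euclideanSpace, Fintype.card_fin]
    have : π / (1 / (4 * t)) = 4 * π * t := by field_simp
    rw [this, ← Real.rpow_add (by positivity)]
    have : -(d : ℝ) / 2 + d / 2 = 0 := by ring
    rw [this, Real.rpow_zero]
  refine ⟨?_, h2⟩
  by_contra hc
  rw [integral_undef hc] at h2
  norm_num at h2

lemma aux_gauss1 (t : ℝ) (ht : 0 < t) :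
    Integrable (fun z : ℝ => (4 * π * t) ^ (-(1 : ℝ) / 2) * Real.exp (-z ^ 2 / (4 * t))) ∧
    ∫ z : ℝ, (4 * π * t) ^ (-(1 : ℝ) / 2) * Real.exp (-z ^ 2 / (4 * t)) = 1 := by
  have h2 : ∫ z : ℝ, (4 * π * t) ^ (-(1 : ℝ) / 2) * Real.exp (-z ^ 2 / (4 * t)) = 1 := by
    rw [integral_const_mul]
    have e : (fun z : ℝ => Real.exp (-z ^ 2 / (4 * t))) =
        fun z => Real.exp (-(1 / (4 * t)) * z ^ 2) := by
      funext z; congr 1; ring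
    rw [e, integral_gaussian]
    have : π / (1 / (4 * t)) = 4 * π * t := by field_simp
    rw [this, Real.sqrt_eq_rpow, ← Real.rpow_add (by positivity)]
    norm_num
  refine ⟨?_, h2⟩
  by_contra hc
  rw [integral_undef hc] at h2
  norm_num at h2

lemma heat_le_sup (d : ℕ) (t : ℝ) (ht : 0 < t) (u : E d → ℂ) (M : ℝ) (hM : ∀ y, ‖u y‖ ≤ M)
    (x : E d) : ‖heat d t u x‖ ≤ M := by
  obtain ⟨hi, h1⟩ := aux_gauss d t ht x
  unfold heat
  refine (norm_integral_le_of_norm_le (hi.mul_const M) (Filter.Eventually.of_forall ?_)).trans ?_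
  · intro y
    rw [norm_mul, Complex.norm_real, Real.norm_of_nonneg (by positivity)]
    exact mul_le_mul_of_nonneg_left (hM y) (by positivity)
  · rw [integral_mul_const, h1, one_mul]

lemma heat_le_L1 (d : ℕ) (t : ℝ) (ht : 0 < t) (u : E d → ℂ) (hu : Integrable u)
    (x : E d) : ‖heat d t u x‖ ≤ (4 * π * t) ^ (-(d : ℝ) / 2) * ∫ y, ‖u y‖ := by
  unfold heat
  refine (norm_integral_le_of_norm_le (hu.norm.const_mul ((4 * π * t) ^ (-(d : ℝ) / 2)))
    (Filter.Eventually.of_forall ?_)).trans ?_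
  · intro y
    rw [norm_mul, Complex.norm_real, Real.norm_of_nonneg (by positivity)]
    refine mul_le_mul_of_nonneg_right ?_ (norm_nonneg _)
    refine mul_le_of_le_one_right (by positivity) ?_
    rw [Real.exp_le_one_iff]
    exact div_nonpos_of_nonpos_of_nonneg (by simp) (by positivity)
  · rw [integral_const_mul]

lemma heat1_eq (t : ℝ) (u : ℝ → ℂ) (x : ℝ) :
    heat1 t u x = ∫ z : ℝ, ((4 * π * t) ^ (-(1 : ℝ) / 2) * Real.exp (-z ^ 2 / (4 * t)) : ℝ)
      * u (x - z) := by
  unfold heat1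
  rw [← integral_sub_left_eq_self _ volume x]
  simp

lemma heat1_le_sup (t : ℝ) (ht : 0 < t) (u : ℝ → ℂ) (M : ℝ) (hM : ∀ y, ‖u y‖ ≤ M)
    (x : ℝ) : ‖heat1 t u x‖ ≤ M := by
  obtain ⟨hi, h1⟩ := aux_gauss1 t ht
  rw [heat1_eq]
  refine (norm_integral_le_of_norm_le (hi.mul_const M) (Filter.Eventually.of_forall ?_)).trans ?_
  · intro y
    rw [norm_mul, Complex.norm_real, Real.norm_of_nonneg (by positivity)]
    exact mul_le_mul_of_nonneg_left (hM _) (by positivity)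
  · rw [integral_mul_const, h1, one_mul]

lemma heat1_tendsto (t : ℝ) (ht : 0 < t) (u : ℝ → ℂ) (hu : Continuous u) (M : ℝ)
    (hM : ∀ y, ‖u y‖ ≤ M) (y0 : ℝ) :
    Filter.Tendsto (fun ε : ℝ => heat1 t (fun z => u (ε * z)) (y0 / ε))
      (nhdsWithin 0 (Set.Ioi 0)) (nhds (u y0)) := by
  obtain ⟨hi, h1⟩ := aux_gauss1 t ht
  have key : Filter.Tendsto (fun ε : ℝ =>
      ∫ z : ℝ, ((4 * π * t) ^ (-(1 : ℝ) / 2) * Real.exp (-z ^ 2 / (4 * t)) : ℝ)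
      * u (y0 - ε * z)) (nhdsWithin 0 (Set.Ioi 0)) (nhds (
      ∫ z : ℝ, ((4 * π * t) ^ (-(1 : ℝ) / 2) * Real.exp (-z ^ 2 / (4 * t)) : ℝ) * u y0)) := by
    refine tendsto_integral_filter_of_dominated_convergence _ ?_ ?_ (hi.mul_const M) ?_
    · refine Filter.Eventually.of_forall fun ε => ?_
      refine Continuous.aestronglyMeasurable ?_
      fun_prop
    · refine Filter.Eventually.of_forall fun ε => Filter.Eventually.of_forall fun y => ?_
      rw [norm_mul, Complex.norm_real, Real.norm_of_nonneg (by positivity)]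
      exact mul_le_mul_of_nonneg_left (hM _) (by positivity)
    · refine Filter.Eventually.of_forall fun z => ?_
      refine Filter.Tendsto.const_mul _ ?_
      have : Continuous (fun ε : ℝ => u (y0 - ε * z)) := by fun_prop
      have := this.tendsto 0
      simp only [zero_mul, sub_zero] at this
      exact this.mono_left nhdsWithin_le_nhds
  rw [integral_mul_const, integral_complex_ofReal, h1, Complex.ofReal_one, one_mul] at key
  refine key.congr' ?_
  filter_upwards [self_mem_nhdsWithin] with ε hε
  have hε : (ε : ℝ) ≠ 0 := ne_of_gt hε
  rw [heat1_eq]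
  congr 1
  funext z
  congr 2
  field_simp

lemma heat_prod (t : ℝ) (ht : 0 < t) (u : E 2 → ℂ) (v : ℝ → ℂ) (x : E 2) (s : ℝ) :
    ∀ x' : E 3, (EuclideanSpace.equiv (Fin 2) ℝ).symm ![x' 0, x' 1] = x → x' 2 = s →
    heat 3 t (fun y : E 3 => u ((EuclideanSpace.equiv (Fin 2) ℝ).symm ![y 0, y 1]) * v (y 2)) x' =
      heat1 t v s * heat 2 t u x := by
  rintro x' rfl rfl
  unfold heat heat1
  rw [← (EuclideanSpace.volume_preserving_symm_measurableEquiv_toLp (Fin 3)).symm.integral_comp',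
    ← (EuclideanSpace.volume_preserving_symm_measurableEquiv_toLp (Fin 2)).symm.integral_comp',
    ← (volume_preserving_piFinSuccAbove (fun _ : Fin 3 => ℝ) 2).symm.integral_comp',
    ← integral_prod_mul, ← Measure.volume_eq_prod]
  congr 1
  funext p
  obtain ⟨a, b⟩ := p
  have e0 : (MeasurableEquiv.piFinSuccAbove (fun _ : Fin 3 => ℝ) 2).symm (a, b) 0 = b 0 := by
    rfl
  have e1 : (MeasurableEquiv.piFinSuccAbove (fun _ : Fin 3 => ℝ) 2).symm (a, b) 1 = b 1 := by
    rfl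
  have e2 : (MeasurableEquiv.piFinSuccAbove (fun _ : Fin 3 => ℝ) 2).symm (a, b) 2 = a := by
    rfl
  have hb : ![b 0, b 1] = b := by funext i; fin_cases i <;> rfl
  simp only [MeasurableEquiv.symm_symm, MeasurableEquiv.coe_toLp, EuclideanSpace.norm_sq_eq,
    Fin.sum_univ_three, Fin.sum_univ_two, PiLp.sub_apply, e0, e1, e2, hb]
  have hk : (4 * π * t) ^ (-((3 : ℕ) : ℝ) / 2) =
      (4 * π * t) ^ (-(1 : ℝ) / 2) * (4 * π * t) ^ (-((2 : ℕ) : ℝ) / 2) := by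
    rw [← Real.rpow_add (by positivity)]; congr 1; norm_num
  rw [hk]
  simp only [Real.norm_eq_abs, sq_abs]
  have he : Real.exp (-((x' 0 - b 0) ^ 2 + (x' 1 - b 1) ^ 2 + (x' 2 - a) ^ 2) / (4 * t)) =
    Real.exp (-(x' 2 - a) ^ 2 / (4 * t)) *
    Real.exp (-((x' 0 - b 0) ^ 2 + (x' 1 - b 1) ^ 2) / (4 * t)) := by
    rw [← Real.exp_add]; congr 1; ring
  rw [he]
  simp
  ring

lemma heat2_bdd (f : SchwartzMap (E 2) ℂ) :
    ∃ C : ℝ, 0 ≤ C ∧ ∀ t > 0, ∀ x, Real.sqrt t * ‖heat 2 t f x‖ ≤ C := by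
  obtain ⟨M, hM⟩ : ∃ M : ℝ, ∀ y, ‖f y‖ ≤ M := ⟨_, f.norm_le_seminorm ℝ⟩
  have hM0 : 0 ≤ M := (norm_nonneg _).trans (hM 0)
  have hI : 0 ≤ ∫ y, ‖f y‖ := integral_nonneg fun _ => norm_nonneg _
  refine ⟨M + ∫ y, ‖f y‖, by positivity, fun t ht x => ?_⟩
  rcases le_total t 1 with h | h
  · have h1 := heat_le_sup 2 t ht f M hM x
    have h2 : Real.sqrt t ≤ 1 := Real.sqrt_le_one.2 h
    have := mul_le_mul h2 h1 (norm_nonneg _) zero_le_one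
    linarith
  · have h1 := heat_le_L1 2 t ht f f.integrable x
    have h3 : (4 * π * t) ^ (-((2 : ℕ) : ℝ) / 2) = (4 * π * t)⁻¹ := by
      rw [← Real.rpow_neg_one]; congr 1; norm_num
    rw [h3] at h1
    have h2 : Real.sqrt t * (4 * π * t)⁻¹ ≤ 1 := by
      rw [← div_eq_mul_inv, div_le_one (by positivity)]
      have : Real.sqrt t ≤ t := Real.sqrt_le_iff.2 ⟨by linarith, by nlinarith⟩
      nlinarith [Real.pi_gt_three]
    calc _ ≤ Real.sqrt t * ((4 * π * t)⁻¹ * ∫ y, ‖f y‖) := by gcongr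
      _ = (Real.sqrt t * (4 * π * t)⁻¹) * ∫ y, ‖f y‖ := by ring
      _ ≤ 1 * ∫ y, ‖f y‖ := by gcongr
      _ ≤ _ := by linarith

lemma le_besov (d : ℕ) (u : E d → ℂ) (C : ℝ) (hC0 : 0 ≤ C)
    (hC : ∀ t > 0, ∀ x, Real.sqrt t * ‖heat d t u x‖ ≤ C) (t : ℝ) (ht : 0 < t) (x : E d) :
    Real.sqrt t * ‖heat d t u x‖ ≤ besov d u := by
  have hsup : ∀ t > 0, Real.sqrt t * ⨆ x : E d, ‖heat d t u x‖ ≤ C := by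
    intro t ht
    have hs : 0 < Real.sqrt t := Real.sqrt_pos.2 ht
    rw [mul_comm, ← le_div_iff₀ hs]
    refine ciSup_le fun x => ?_
    rw [le_div_iff₀ hs, mul_comm]
    exact hC t ht x
  have hb : BddAbove (Set.range fun x : E d => ‖heat d t u x‖) := by
    refine ⟨C / Real.sqrt t, ?_⟩
    rintro _ ⟨x, rfl⟩
    show ‖heat d t u x‖ ≤ _
    rw [le_div_iff₀ (Real.sqrt_pos.2 ht), mul_comm]
    exact hC t ht x
  have h1 : Real.sqrt t * ‖heat d t u x‖ ≤ Real.sqrt t * ⨆ x : E d, ‖heat d t u x‖ := by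
    gcongr
    exact le_ciSup hb x
  refine h1.trans ?_
  have hb2 : BddAbove (Set.range fun t : ℝ => ⨆ (_ : t > 0),
      Real.sqrt t * ⨆ x : E d, ‖heat d t u x‖) := by
    refine ⟨C, ?_⟩
    rintro _ ⟨s, rfl⟩
    exact Real.iSup_le (fun hs => hsup s hs) hC0
  have h2 := le_ciSup hb2 t
  have : Nonempty (t > 0) := ⟨ht⟩
  simp only [ciSup_const] at h2
  exact h2

lemma besov_nonneg (d : ℕ) (u : E d → ℂ) : 0 ≤ besov d u :=
  Real.iSup_nonneg fun _ => Real.iSup_nonneg fun _ =>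
    mul_nonneg (Real.sqrt_nonneg _) (Real.iSup_nonneg fun _ => norm_nonneg _)

lemma exists_besov (d : ℕ) (u : E d → ℂ) (c : ℝ) (hc : 0 < c) (h : c < besov d u) :
    ∃ t > 0, ∃ x, c < Real.sqrt t * ‖heat d t u x‖ := by
  by_contra! hcon
  refine absurd h (not_lt.2 ?_)
  refine Real.iSup_le (fun t => Real.iSup_le (fun ht => ?_) hc.le) hc.le
  have hs : 0 < Real.sqrt t := Real.sqrt_pos.2 ht
  rw [mul_comm, ← le_div_iff₀ hs]
  refine ciSup_le fun x => ?_
  rw [le_div_iff₀ hs, mul_comm]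
  exact hcon t ht x

/-- for `h_ε(x_h,x₃) = f(x_h) g(εx₃)` with `f ∈ 𝒮(ℝ²)`, `g ∈ 𝒮(ℝ)`,
`‖h_ε‖_{Ḃ^{-1}_{∞,∞}(ℝ³)} ≥ (1/4) ‖f‖_{Ḃ^{-1}_{∞,∞}(ℝ²)} ‖g‖_{L^∞(ℝ)}` for `ε` small enough. -/
theorem slow_variation_besov_lower_bound
    (f : SchwartzMap (E 2) ℂ) (g : SchwartzMap ℝ ℂ) :
    ∃ ε₀ > (0:ℝ), ∀ ε : ℝ, 0 < ε → ε ≤ ε₀ →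
      besov 3 (fun x : E 3 =>
          f ((EuclideanSpace.equiv (Fin 2) ℝ).symm ![x 0, x 1]) * g (ε * x 2)) ≥
        (1/4) * besov 2 ⇑f * ⨆ y : ℝ, ‖g y‖ := by
  have hG0 : 0 ≤ ⨆ y : ℝ, ‖g y‖ := Real.iSup_nonneg fun _ => norm_nonneg _
  rcases (besov_nonneg 2 f).eq_or_lt with hB | hB
  · refine ⟨1, one_pos, fun ε _ _ => ?_⟩
    rw [← hB]
    simpa using besov_nonneg 3 _
  rcases hG0.eq_or_lt with hG | hG
  · refine ⟨1, one_pos, fun ε _ _ => ?_⟩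
    rw [← hG]
    simpa using besov_nonneg 3 _
  obtain ⟨t, ht, x, hx⟩ := exists_besov 2 f (besov 2 f / 2) (by linarith) (by linarith)
  obtain ⟨y0, hy0⟩ := exists_lt_of_lt_ciSup (show (⨆ y : ℝ, ‖g y‖) / 2 < ⨆ y : ℝ, ‖g y‖ by linarith)
  obtain ⟨M, hM⟩ : ∃ M : ℝ, ∀ y, ‖g y‖ ≤ M := ⟨_, g.norm_le_seminorm ℝ⟩
  have hM0 : 0 ≤ M := (norm_nonneg _).trans (hM 0)
  obtain ⟨C, hC0, hC⟩ := heat2_bdd f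
  have hlim := (heat1_tendsto t ht g g.continuous M hM y0).norm.eventually (lt_mem_nhds hy0)
  obtain ⟨ε₀, hε₀, hmem⟩ := mem_nhdsGT_iff_exists_Ioc_subset.1 hlim
  refine ⟨ε₀, hε₀, fun ε h1 h2 => ?_⟩
  have hg : (⨆ y : ℝ, ‖g y‖) / 2 < ‖heat1 t (fun z => g (ε * z)) (y0 / ε)‖ := hmem ⟨h1, h2⟩
  have hbound : ∀ t > 0, ∀ x' : E 3, Real.sqrt t * ‖heat 3 t (fun x : E 3 =>
      f ((EuclideanSpace.equiv (Fin 2) ℝ).symm ![x 0, x 1]) * g (ε * x 2)) x'‖ ≤ M * C := by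
    intro t ht x'
    rw [heat_prod t ht f (fun z => g (ε * z)) _ _ x' rfl rfl, norm_mul, mul_left_comm]
    exact mul_le_mul (heat1_le_sup t ht _ M (fun y => hM _) _) (hC t ht _) (by positivity) hM0
  have hfin := le_besov 3 _ (M * C) (by positivity) hbound t ht
    ((EuclideanSpace.equiv (Fin 3) ℝ).symm ![x 0, x 1, y0 / ε])
  rw [heat_prod t ht f (fun z => g (ε * z)) x (y0 / ε) _
    (by ext i; fin_cases i <;> rfl) rfl, norm_mul, mul_left_comm] at hfin
  refine ge_iff_le.2 (le_trans ?_ hfin)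
  have := mul_le_mul hg.le hx.le (by positivity) (norm_nonneg _)
  linarith
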